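/- Let P be a trace preserving quantum operation on the N×N complex matrices, i.e. P(X) = ∑_{j=1}^k A_j X A_jᴴ with ∑_{j=1}^k A_jᴴ A_j = I. Then for every density matrix ρ (positive semidefinite with trace 1) the Cesàro means (1/n) ∑_{k=0}^{n-1} P^k(ρ) converge as n → ∞ to a density matrix ρ̄ satisfying P(ρ̄) = ρ̄; in particular 1 is an eigenvalue of P. -/

import Mathlib

open ComplexOrder Matrix Complex Filter Finset

/-!
A trace preserving positive map sends positive semidefinite matrices to positive semidefinite
matrices of the same trace, and the Hilbert–Schmidt norm of a positive semidefinite matrix is at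
most its trace, because `‖Bᴴ * B‖ ≤ ‖B‖ ^ 2 = trace (Bᴴ * B)`. So the orbit of a density matrix is
bounded.

In finite dimension a bounded orbit is enough for convergence of the Cesàro means, which Mathlib
calls Birkhoff averages. Restrict the linear map `T` to the subspace of vectors with bounded orbit.
The averages of a fixed vector are constant and those of a coboundary `T y - y` tend to `0` by
telescoping, so `T - 1` has disjoint kernel and range, and by a dimension count every vector is the
sum of a fixed vector and a coboundary. The averages converge to the fixed summand.
-/

open scoped Topology
open Bornology

section BoundedOrbits

variable {𝕜 E : Type*} [NormedField 𝕜] [SeminormedAddCommGroup E] [NormedSpace 𝕜 E]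

/-- The subspace of vectors whose forward orbit under `T` is bounded. Restricting to it gives a mean
ergodic theorem for a single bounded orbit, with `T` itself possibly not power bounded. -/
def boundedOrbits (T : E →ₗ[𝕜] E) : Submodule 𝕜 E where
  carrier := {x | IsBounded (Set.range (T^[·] x))}
  zero_mem' := by simp [iterate_map_zero]
  add_mem' {x y} hx hy := (hx.add hy).subset <| by
    rintro _ ⟨n, rfl⟩
    exact ⟨_, ⟨n, rfl⟩, _, ⟨n, rfl⟩, (iterate_map_add T n x y).symm⟩
  smul_mem' c x hx := (hx.smul₀ c).subset <| by
    rintro _ ⟨n, rfl⟩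
    exact ⟨_, ⟨n, rfl⟩, by simp only [← Module.End.coe_pow, map_smul]⟩

theorem mem_boundedOrbits {T : E →ₗ[𝕜] E} {x : E} :
    x ∈ boundedOrbits T ↔ IsBounded (Set.range (T^[·] x)) :=
  Iff.rfl

theorem map_mem_boundedOrbits (T : E →ₗ[𝕜] E) {x : E} (hx : x ∈ boundedOrbits T) :
    T x ∈ boundedOrbits T :=
  (mem_boundedOrbits.mp hx).subset <| by
    rintro _ ⟨n, rfl⟩
    exact ⟨n + 1, rfl⟩

end BoundedOrbits

section MeanErgodic

variable {𝕜 E : Type*} [RCLike 𝕜] [NormedAddCommGroup E] [NormedSpace 𝕜 E]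

theorem tendsto_birkhoffAverage_map_sub_self (T : E →ₗ[𝕜] E) {y : E}
    (hy : y ∈ boundedOrbits T) :
    Tendsto (birkhoffAverage 𝕜 T id · (T y - y)) atTop (𝓝 0) := by
  simpa only [birkhoffAverage, birkhoffSum, id_eq, iterate_map_sub, sum_sub_distrib, smul_sub]
    using tendsto_birkhoffAverage_apply_sub_birkhoffAverage 𝕜 (g := id) hy

theorem map_sub_self_eq_zero_of_isFixedPt (T : E →ₗ[𝕜] E) {y : E} (hy : y ∈ boundedOrbits T)
    (hfix : Function.IsFixedPt T (T y - y)) : T y - y = 0 :=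
  tendsto_nhds_unique (hfix.tendsto_birkhoffAverage 𝕜 id)
    (tendsto_birkhoffAverage_map_sub_self T hy)

variable [FiniteDimensional 𝕜 E]

theorem exists_map_sub_self_add_isFixedPt_eq (T : E →ₗ[𝕜] E) {x : E} (hx : x ∈ boundedOrbits T) :
    ∃ y ∈ boundedOrbits T, ∃ z, Function.IsFixedPt T z ∧ T y - y + z = x := by
  let S : boundedOrbits T →ₗ[𝕜] boundedOrbits T :=
    (T - 1).restrict fun y hy => sub_mem (map_mem_boundedOrbits T hy) hy
  have hdisj : Disjoint S.range S.ker := by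
    rw [Submodule.disjoint_def]
    rintro _ ⟨y, rfl⟩ hker
    refine Subtype.ext (map_sub_self_eq_zero_of_isFixedPt T y.2 ?_)
    exact sub_eq_zero.mp (congrArg Subtype.val hker)
  have htop : S.range ⊔ S.ker = ⊤ :=
    Submodule.eq_top_of_disjoint _ _ S.finrank_range_add_finrank_ker.ge hdisj
  have hmem : (⟨x, hx⟩ : boundedOrbits T) ∈ S.range ⊔ S.ker := htop ▸ Submodule.mem_top
  obtain ⟨_, ⟨y, rfl⟩, z, hz, hyz⟩ := Submodule.mem_sup.mp hmem
  exact ⟨y, y.2, z, sub_eq_zero.mp (congrArg Subtype.val hz), congrArg Subtype.val hyz⟩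

theorem exists_isFixedPt_tendsto_birkhoffAverage (T : E →ₗ[𝕜] E) {x : E}
    (hx : x ∈ boundedOrbits T) :
    ∃ z, Function.IsFixedPt T z ∧ Tendsto (birkhoffAverage 𝕜 T id · x) atTop (𝓝 z) := by
  obtain ⟨y, hy, z, hz, rfl⟩ := exists_map_sub_self_add_isFixedPt_eq T hx
  have hsum := (tendsto_birkhoffAverage_map_sub_self T hy).add (hz.tendsto_birkhoffAverage 𝕜 id)
  refine ⟨z, hz, ?_⟩
  simpa only [birkhoffAverage, birkhoffSum, id_eq, iterate_map_add, sum_add_distrib, smul_add,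
    zero_add] using hsum

end MeanErgodic

theorem trace_birkhoffAverage {K n : Type*} [DivisionRing K] [CharZero K] [Fintype n]
    {P : Matrix n n K → Matrix n n K} (htr : ∀ X, (P X).trace = X.trace) {k : ℕ} (hk : k ≠ 0)
    (X : Matrix n n K) : (birkhoffAverage K P id k X).trace = X.trace :=
  calc (birkhoffAverage K P id k X).trace = birkhoffAverage K P trace k X :=
        map_birkhoffAverage K K (traceLinearMap n K K) P id k X
    _ = X.trace :=
        congrFun (birkhoffAverage_of_comp_eq K (funext htr) (Nat.cast_ne_zero.mpr hk)) X

section PosSemidef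

variable {𝕜 n : Type*} [RCLike 𝕜]

theorem posSemidef_birkhoffAverage {α : Type*} {f : α → α} {g : α → Matrix n n 𝕜} {x : α}
    (h : ∀ i, (g (f^[i] x)).PosSemidef) (k : ℕ) : (birkhoffAverage 𝕜 f g k x).PosSemidef :=
  (posSemidef_sum _ fun i _ => h i).smul (by positivity)

theorem isClosed_setOf_posSemidef [Finite n] : IsClosed {A : Matrix n n 𝕜 | A.PosSemidef} := by
  have := Fintype.ofFinite n
  simp only [posSemidef_iff_dotProduct_mulVec, IsHermitian, Set.ofPred_and, Set.ofPred_forall]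
  exact (isClosed_eq (by fun_prop) (by fun_prop)).inter
    (isClosed_iInter fun v => isClosed_le continuous_const (by fun_prop))

variable [Fintype n]

-- The topology of the Frobenius norm is the entrywise one by definition, so the limits below do not
-- depend on this choice of norm.
open scoped Matrix.Norms.Frobenius

theorem frobenius_norm_sq_eq_re_trace {m : Type*} [Fintype m] (A : Matrix m n 𝕜) :
    ‖A‖ ^ 2 = RCLike.re (Aᴴ * A).trace := by
  rw [frobenius_norm_def, ← Real.sqrt_eq_rpow, Real.sq_sqrt (by positivity), sum_comm]
  simp [trace, mul_apply, ← RCLike.normSq_eq_def', RCLike.normSq_apply]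

open scoped MatrixOrder in
theorem frobenius_norm_le_re_trace {A : Matrix n n 𝕜} (hA : A.PosSemidef) :
    ‖A‖ ≤ RCLike.re A.trace := by
  classical
  obtain ⟨B, rfl⟩ := CStarAlgebra.nonneg_iff_eq_star_mul_self.mp hA.nonneg
  calc ‖Bᴴ * B‖ ≤ ‖Bᴴ‖ * ‖B‖ := frobenius_norm_mul _ _
    _ = ‖B‖ ^ 2 := by rw [frobenius_norm_conjTranspose, sq]
    _ = RCLike.re (Bᴴ * B).trace := frobenius_norm_sq_eq_re_trace B

variable {P : Matrix n n 𝕜 →ₗ[𝕜] Matrix n n 𝕜}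

theorem mem_boundedOrbits_of_posSemidef (hpos : ∀ X, X.PosSemidef → (P X).PosSemidef)
    (htr : ∀ X, X.PosSemidef → (P X).trace ≤ X.trace) {X : Matrix n n 𝕜} (hX : X.PosSemidef) :
    X ∈ boundedOrbits P := by
  have horbit : ∀ i, (P^[i] X).PosSemidef := Function.Iterate.rec _ hX hpos
  have htrace : Antitone fun i => (P^[i] X).trace := antitone_nat_of_succ_le fun i => by
    rw [Function.iterate_succ_apply']
    exact htr _ (horbit i)
  rw [mem_boundedOrbits, isBounded_iff_forall_norm_le]
  refine ⟨RCLike.re X.trace, Set.forall_mem_range.mpr fun i => ?_⟩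
  exact (frobenius_norm_le_re_trace (horbit i)).trans (RCLike.re_le_re (htrace i.zero_le))

theorem exists_posSemidef_isFixedPt_tendsto_birkhoffAverage
    (hpos : ∀ X, X.PosSemidef → (P X).PosSemidef)
    (htr : ∀ X, X.PosSemidef → (P X).trace ≤ X.trace) {X : Matrix n n 𝕜} (hX : X.PosSemidef) :
    ∃ Y : Matrix n n 𝕜, Y.PosSemidef ∧ Function.IsFixedPt P Y ∧
      Tendsto (birkhoffAverage 𝕜 P id · X) atTop (𝓝 Y) := by
  obtain ⟨Y, hfix, hlim⟩ :=
    exists_isFixedPt_tendsto_birkhoffAverage P (mem_boundedOrbits_of_posSemidef hpos htr hX)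
  refine ⟨Y, isClosed_setOf_posSemidef.mem_of_tendsto hlim (.of_forall fun k => ?_), hfix, hlim⟩
  exact posSemidef_birkhoffAverage (g := id) (Function.Iterate.rec _ hX hpos) k

theorem exists_posSemidef_trace_eq_isFixedPt_tendsto_birkhoffAverage
    (hpos : ∀ X, X.PosSemidef → (P X).PosSemidef) (htr : ∀ X, (P X).trace = X.trace)
    {X : Matrix n n 𝕜} (hX : X.PosSemidef) :
    ∃ Y : Matrix n n 𝕜, Y.PosSemidef ∧ Y.trace = X.trace ∧ Function.IsFixedPt P Y ∧
      Tendsto (birkhoffAverage 𝕜 P id · X) atTop (𝓝 Y) := by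
  obtain ⟨Y, hY, hfix, hlim⟩ :=
    exists_posSemidef_isFixedPt_tendsto_birkhoffAverage hpos (fun X _ => (htr X).le) hX
  have hcont : Continuous (trace : Matrix n n 𝕜 → 𝕜) := continuous_id.matrix_trace
  have htrace : Tendsto (fun k => (birkhoffAverage 𝕜 P id k X).trace) atTop (𝓝 X.trace) :=
    tendsto_const_nhds.congr' <| (eventually_ne_atTop 0).mono fun k hk =>
      (trace_birkhoffAverage htr hk X).symm
  exact ⟨Y, hY, tendsto_nhds_unique ((hcont.tendsto Y).comp hlim) htrace, hfix, hlim⟩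

end PosSemidef

section Kraus

variable {R ι m n : Type*} [Fintype ι] [Fintype n]

/-- The map `X ↦ ∑ j, A j * X * (A j)ᴴ` with Kraus operators `A j`, the general form of a completely
positive map between complex matrix algebras; the `A j` may be rectangular. -/
def krausMap [CommSemiring R] [StarRing R] (A : ι → Matrix m n R) :
    Matrix n n R →ₗ[R] Matrix m m R where
  toFun X := ∑ j, A j * X * (A j)ᴴ
  map_add' X Y := by simp only [Matrix.mul_add, Matrix.add_mul, sum_add_distrib]
  map_smul' c X := by simp only [Matrix.mul_smul, Matrix.smul_mul, smul_sum, RingHom.id_apply]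

theorem posSemidef_krausMap [CommRing R] [StarRing R] [PartialOrder R] [AddLeftMono R] [Finite m]
    (A : ι → Matrix m n R) {X : Matrix n n R} (hX : X.PosSemidef) : (krausMap A X).PosSemidef :=
  posSemidef_sum _ fun j _ => hX.mul_mul_conjTranspose_same (A j)

theorem trace_krausMap [CommSemiring R] [StarRing R] [Fintype m] (A : ι → Matrix m n R)
    (X : Matrix n n R) : (krausMap A X).trace = ((∑ j, (A j)ᴴ * A j) * X).trace :=
  calc (krausMap A X).trace = ∑ j, (A j * X * (A j)ᴴ).trace := trace_sum _ _
    _ = ∑ j, ((A j)ᴴ * A j * X).trace := sum_congr rfl fun j _ => trace_mul_cycle _ _ _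
    _ = ((∑ j, (A j)ᴴ * A j) * X).trace := by rw [sum_mul, trace_sum]

end Kraus

theorem cesaro_limit_of_trace_preserving_general {𝕜 n : Type*} [RCLike 𝕜] [Fintype n] [Nonempty n]
    (P : Matrix n n 𝕜 →ₗ[𝕜] Matrix n n 𝕜) (hpos : ∀ X, X.PosSemidef → (P X).PosSemidef)
    (htr : ∀ X, (P X).trace = X.trace) :
    (∀ ρ : Matrix n n 𝕜, ρ.PosSemidef →
      ∃ ρbar : Matrix n n 𝕜, ρbar.PosSemidef ∧ ρbar.trace = ρ.trace ∧ P ρbar = ρbar ∧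
        Tendsto (fun k : ℕ => (k : 𝕜)⁻¹ • ∑ i ∈ range k, P^[i] ρ) atTop (𝓝 ρbar)) ∧
    ∃ X : Matrix n n 𝕜, X ≠ 0 ∧ P X = X := by
  classical
  have hlimit := fun (ρ : Matrix n n 𝕜) (hρ : ρ.PosSemidef) =>
    exists_posSemidef_trace_eq_isFixedPt_tendsto_birkhoffAverage hpos htr hρ
  refine ⟨hlimit, ?_⟩
  obtain ⟨X, -, htrX, hX, -⟩ := hlimit 1 .one
  refine ⟨X, ?_, hX⟩
  rintro rfl
  simp [eq_comm] at htrX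

/-- For a trace preserving quantum operation `P(X) = ∑ j, A j * X * (A j)ᴴ`
(with `∑ j, (A j)ᴴ * A j = 1`), the Cesàro means of the iterates applied to any density
matrix converge to a density matrix fixed by `P`; in particular `1` is an eigenvalue of `P`. -/
theorem cesaro_limit_of_trace_preserving
    (N k : ℕ) (hN : 1 ≤ N) (A : Fin k → Matrix (Fin N) (Fin N) ℂ)
    (P : Matrix (Fin N) (Fin N) ℂ → Matrix (Fin N) (Fin N) ℂ)
    (hP : ∀ X, P X = ∑ j, A j * X * (A j)ᴴ)
    (htp : ∑ j, (A j)ᴴ * A j = 1) :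
    (∀ ρ : Matrix (Fin N) (Fin N) ℂ, ρ.PosSemidef → ρ.trace = 1 →
      ∃ ρbar : Matrix (Fin N) (Fin N) ℂ, ρbar.PosSemidef ∧ ρbar.trace = 1 ∧ P ρbar = ρbar ∧
        Filter.Tendsto (fun n : ℕ => (n : ℂ)⁻¹ • ∑ i ∈ Finset.range n, P^[i] ρ)
          Filter.atTop (nhds ρbar)) ∧
    (∃ X : Matrix (Fin N) (Fin N) ℂ, X ≠ 0 ∧ P X = X) := by
  obtain rfl : P = krausMap A := funext hP
  have : NeZero N := ⟨Nat.one_le_iff_ne_zero.mp hN⟩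
  obtain ⟨hlimit, hfixed⟩ := cesaro_limit_of_trace_preserving_general (krausMap A)
    (fun X => posSemidef_krausMap A) (fun X => by rw [trace_krausMap, htp, one_mul])
  exact ⟨fun ρ hρ htr => htr ▸ hlimit ρ hρ, hfixed⟩
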